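/- Let H_< be an ordered graph and let ε > 0. Then there exists a constant c₀ = c₀(H_<, ε) > 0 such that every ordered graph G_< on n vertices that does not contain H_< as an induced ordered subgraph has the following property: there is a subset U of the vertex set of G with |U| ≥ c₀·n such that the induced subgraph G[U] has at most ε·binom(|U|,2) edges, or G[U] has at least (1 − ε)·binom(|U|,2) edges. -/

import Mathlib

/-- The ordered graph `H` (on `Fin a` with its natural order) is contained in the ordered
graph `G` (on `Fin b` with its natural order) as an induced ordered subgraph. -/
def ContainsOrdered {a b : ℕ} (H : SimpleGraph (Fin a)) (G : SimpleGraph (Fin b)) : Prop :=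
  ∃ φ : Fin a → Fin b, StrictMono φ ∧ ∀ u v : Fin a, H.Adj u v ↔ G.Adj (φ u) (φ v)

/-- The number of edges of the subgraph of `G` induced by `U`. -/
noncomputable def edgeCountIn {V : Type*} (G : SimpleGraph V) (U : Finset V) : ℕ :=
  {e : Sym2 V | e ∈ G.edgeSet ∧ ∀ v ∈ e, v ∈ U}.ncard

/-!
The argument is that of Fox and Sudakov. Cut the vertex set into `k` consecutive intervals and try
to embed `H` greedily, one vertex per interval. If `G` has no ordered induced copy of `H`, the
greedy embedding gets stuck, which produces two large disjoint sets `A` and `B` such that, in `G` or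
in its complement, every vertex of `A` has few neighbours in `B`.

Say this happens in `G`. Two equally large subsets of `A` and `B` of density at most `r`, the second
one chosen among the vertices of `B` with few neighbours in the first, have a union of density about
`r / 2`, surely at most `3 r / 4`. So the density can be decreased by a constant factor either in
`G` or in the complement, and a double induction makes one of the two densities arbitrarily small.
-/

section

open Finset

section EdgeCount

variable {V : Type*} (G : SimpleGraph V) (U : Finset V)

theorem edgeCountIn_eq_card_edgeFinset_induce [DecidableRel G.Adj] :
    edgeCountIn G U = #(G.induce (U : Set V)).edgeFinset := by
  have edges_eq_image : {e : Sym2 V | e ∈ G.edgeSet ∧ ∀ v ∈ e, v ∈ U} =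
      Sym2.map Subtype.val '' (G.induce (U : Set V)).edgeSet := by
    ext e
    induction e using Sym2.ind with
    | _ a b =>
      constructor
      · rintro ⟨hab, hU⟩
        exact ⟨s(⟨a, hU a (by simp)⟩, ⟨b, hU b (by simp)⟩), hab, rfl⟩
      · rintro ⟨e, he, heq⟩
        induction e using Sym2.ind with
        | _ x y =>
          rw [← heq]
          exact ⟨he, by simp⟩
  rw [edgeCountIn, edges_eq_image,
    Set.ncard_image_of_injective _ (Sym2.map.injective Subtype.val_injective),
    ← SimpleGraph.coe_edgeFinset, Set.ncard_coe_finset]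

theorem two_mul_edgeCountIn [DecidableRel G.Adj] :
    2 * edgeCountIn G U = #(G.interedges U U) := by
  rw [edgeCountIn_eq_card_edgeFinset_induce, SimpleGraph.two_mul_card_edgeFinset]
  refine card_bij' (fun p _ ↦ (p.1.1, p.2.1))
    (fun p hp ↦ (⟨p.1, (SimpleGraph.mem_interedges_iff G |>.1 hp).1⟩,
      ⟨p.2, (SimpleGraph.mem_interedges_iff G |>.1 hp).2.1⟩)) ?_ ?_ ?_ ?_ <;>
    simp +contextual [SimpleGraph.mem_interedges_iff]

theorem card_interedges_self_add_compl [DecidableEq V] [DecidableRel G.Adj] :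
    #(G.interedges U U) + #(Gᶜ.interedges U U) = #U.offDiag := by
  rw [← card_filter_add_card_filter_not (s := U.offDiag) (fun p ↦ G.Adj p.1 p.2)]
  congr 2 <;> ext ⟨a, b⟩ <;>
    simp only [SimpleGraph.mem_interedges_iff, mem_filter, mem_offDiag, SimpleGraph.compl_adj]
  · have := G.ne_of_adj (a := a) (b := b)
    tauto
  · tauto

theorem edgeCountIn_add_edgeCountIn_compl :
    edgeCountIn G U + edgeCountIn Gᶜ U = (#U).choose 2 := by
  classical
  have h := card_interedges_self_add_compl G U
  rw [← two_mul_edgeCountIn, ← two_mul_edgeCountIn, offDiag_card, ← Nat.mul_sub_one] at h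
  rw [Nat.choose_two_right]
  lia

theorem edgeCountIn_le_choose_two : edgeCountIn G U ≤ (#U).choose 2 :=
  (Nat.le_add_right _ _).trans_eq (edgeCountIn_add_edgeCountIn_compl G U)

variable {G U}

theorem edgeCountIn_eq_zero_of_card_le_one (hU : #U ≤ 1) : edgeCountIn G U = 0 :=
  Nat.le_zero.1 <| (edgeCountIn_le_choose_two G U).trans_eq <| Nat.choose_eq_zero_of_lt (by lia)

theorem edgeCountIn_le_mul_choose_two [DecidableRel G.Adj] {ε : ℝ} (hε : 0 ≤ ε)
    (hG : (#(G.interedges U U) : ℝ) ≤ ε / 2 * #U ^ 2) :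
    (edgeCountIn G U : ℝ) ≤ ε * (#U).choose 2 := by
  rcases le_or_gt #U 1 with hU | hU
  · rw [edgeCountIn_eq_zero_of_card_le_one hU, Nat.cast_zero]
    positivity
  · have hU' : (2 : ℝ) ≤ #U := by exact_mod_cast hU
    have htwo : (2 * edgeCountIn G U : ℝ) = #(G.interedges U U) := by
      exact_mod_cast two_mul_edgeCountIn G U
    rw [Nat.cast_choose_two]
    calc (edgeCountIn G U : ℝ) ≤ ε * (#U ^ 2 / 4) := by linarith
      _ ≤ ε * (#U * (#U - 1) / 2) := mul_le_mul_of_nonneg_left (by nlinarith) hε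

end EdgeCount

section SparseTo

variable {V : Type*} (G : SimpleGraph V) [DecidableRel G.Adj] {β : ℝ} {A A' B : Finset V}

theorem card_interedges_comm (A B : Finset V) :
    #(G.interedges A B) = #(G.interedges B A) :=
  have := G.symm
  Rel.card_interedges_comm A B

theorem card_interedges_eq_sum (A B : Finset V) :
    #(G.interedges A B) = ∑ a ∈ A, #{b ∈ B | G.Adj a b} := by
  simp only [SimpleGraph.interedges_def, card_filter, sum_product]

variable (β A B) in
/-- Every vertex of `A` has at most `β * #B` neighbours in `B`. Unlike a bound on the edge density
between `A` and `B`, this passes to subsets of `A`. -/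
def SparseTo : Prop :=
  ∀ a ∈ A, (#{b ∈ B | G.Adj a b} : ℝ) ≤ β * #B

variable {G}

theorem SparseTo.mono_left (h : SparseTo G β A B) (hA : A' ⊆ A) : SparseTo G β A' B :=
  fun a ha ↦ h a (hA ha)

theorem SparseTo.card_interedges_le (h : SparseTo G β A B) :
    (#(G.interedges A B) : ℝ) ≤ #A * (β * #B) := by
  rw [card_interedges_eq_sum, Nat.cast_sum, ← nsmul_eq_mul]
  exact sum_le_card_nsmul A _ _ h

theorem SparseTo.exists_subset_swap (h : SparseTo G β A B) (hβ : 0 < β) (hA : A.Nonempty) :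
    ∃ B₀ ⊆ B, #B ≤ 2 * #B₀ ∧ SparseTo G (2 * β) B₀ A := by
  set bad := {b ∈ B | ¬ (#{a ∈ A | G.Adj b a} : ℝ) ≤ 2 * β * #A}
  refine ⟨{b ∈ B | (#{a ∈ A | G.Adj b a} : ℝ) ≤ 2 * β * #A}, filter_subset _ _, ?_,
    fun b hb ↦ (mem_filter.1 hb).2⟩
  have hbad : (#bad : ℝ) * (2 * β * #A) ≤ #A * (β * #B) := calc
    (#bad : ℝ) * (2 * β * #A) ≤ ∑ b ∈ bad, (#{a ∈ A | G.Adj b a} : ℝ) := by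
      rw [← nsmul_eq_mul]
      exact card_nsmul_le_sum _ _ _ fun b hb ↦ (not_le.1 (mem_filter.1 hb).2).le
    _ = #(G.interedges bad A) := by rw [card_interedges_eq_sum, Nat.cast_sum]
    _ ≤ #(G.interedges B A) :=
      mod_cast card_le_card (G.interedges_mono (filter_subset _ _) subset_rfl)
    _ = #(G.interedges A B) := by rw [card_interedges_comm]
    _ ≤ #A * (β * #B) := h.card_interedges_le
  have hA' : (0 : ℝ) < β * #A := by
    have := hA.card_pos
    positivity
  have hbad' : 2 * #bad ≤ #B := by
    have : (2 * #bad : ℝ) ≤ #B := le_of_mul_le_mul_right (by linarith) hA'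
    exact_mod_cast this
  have := card_filter_add_card_filter_not (s := B)
    (fun b ↦ (#{a ∈ A | G.Adj b a} : ℝ) ≤ 2 * β * #A)
  lia

theorem sparseTo_or_sparseTo_compl [DecidableEq V] {p : Prop} [Decidable p]
    (h : ∀ a ∈ A, (#{b ∈ B | G.Adj a b ↔ p} : ℝ) ≤ β * #B) :
    SparseTo G β A B ∨ SparseTo Gᶜ β A B := by
  by_cases hp : p
  · exact .inl fun a ha ↦ by simpa [hp] using h a ha
  · refine .inr fun a ha ↦ le_trans ?_ (h a ha)
    gcongr with b
    simp only [SimpleGraph.compl_adj, hp, iff_false]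
    exact And.right

end SparseTo

section GreedyEmbedding

theorem exists_subset_forall_of_forall_exists {α ι : Type*} [Fintype ι] {P : α → ι → Prop}
    {S : Finset α} (hS : S.Nonempty) (h : ∀ a ∈ S, ∃ i, P a i) :
    ∃ i, ∃ A ⊆ S, #S ≤ Fintype.card ι * #A ∧ ∀ a ∈ A, P a i := by
  classical
  obtain ⟨a, ha⟩ := hS
  have : Nonempty ι := ⟨(h a ha).choose⟩
  by_contra! hcon
  have hlt : ∀ i, Fintype.card ι * #{a ∈ S | P a i} < #S := fun i ↦ by
    by_contra! hi
    obtain ⟨a, ha, hPa⟩ := hcon i _ (filter_subset _ _) hi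
    exact hPa (mem_filter.1 ha).2
  have hcover : #S ≤ ∑ i, #{a ∈ S | P a i} := by
    refine le_trans (card_le_card fun a ha ↦ ?_) card_biUnion_le
    simpa [ha] using h a ha
  have := sum_lt_sum_of_nonempty univ_nonempty fun i _ ↦ hlt i
  rw [← mul_sum, sum_const, card_univ, smul_eq_mul] at this
  exact absurd (Nat.mul_le_mul_left _ hcover) this.not_ge

variable {V : Type*} (G : SimpleGraph V) {k : ℕ} {β s : ℝ}

theorem adj_iff_adj_fin_cons (H : SimpleGraph (Fin (k + 1))) {v : V} {φ : Fin k → V}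
    (hv : ∀ j, G.Adj v (φ j) ↔ H.Adj 0 j.succ)
    (hφ : ∀ i j, H.Adj i.succ j.succ ↔ G.Adj (φ i) (φ j)) (i j : Fin (k + 1)) :
    H.Adj i j ↔ G.Adj (Fin.cons (α := fun _ ↦ V) v φ i) (Fin.cons (α := fun _ ↦ V) v φ j) := by
  cases i using Fin.cases <;> cases j using Fin.cases <;>
    simp [hv, hφ, H.adj_comm _ 0, G.adj_comm _ v]

variable [DecidableEq V] [DecidableRel G.Adj]

variable {G} in
theorem exists_sparseTo_of_forall_exists_le {ι : Type*} [Fintype ι] {S : Finset V}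
    {W : ι → Finset V} {p : ι → Prop} [DecidablePred p] (hS : S.Nonempty)
    (h : ∀ v ∈ S, ∃ j, (#{w ∈ W j | G.Adj v w ↔ p j} : ℝ) ≤ β * #(W j)) :
    ∃ j, ∃ A ⊆ S, #S ≤ Fintype.card ι * #A ∧
      (SparseTo G β A (W j) ∨ SparseTo Gᶜ β A (W j)) := by
  obtain ⟨j, A, hA, hcard, hsparse⟩ := exists_subset_forall_of_forall_exists hS h
  exact ⟨j, A, hA, hcard, sparseTo_or_sparseTo_compl hsparse⟩

theorem exists_transversal_or_exists_sparseTo (H : SimpleGraph (Fin k)) (W : Fin k → Finset V)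
    (hβ : 0 < β) (hβ1 : β ≤ 1) (hs : 0 < s) (hW : ∀ i, s ≤ #(W i)) :
    (∃ φ : Fin k → V, (∀ i, φ i ∈ W i) ∧ ∀ i j, H.Adj i j ↔ G.Adj (φ i) (φ j)) ∨
      ∃ i j, i ≠ j ∧ ∃ A ⊆ W i, ∃ B ⊆ W j,
        β ^ k / (k + 1) * s ≤ #A ∧ β ^ k / (k + 1) * s ≤ #B ∧
          (SparseTo G β A B ∨ SparseTo Gᶜ β A B) := by
  classical
  induction k generalizing s with
  | zero => exact .inl ⟨Fin.elim0, fun i ↦ i.elim0, fun i ↦ i.elim0⟩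
  | succ k ih =>
    let N (v : V) (j : Fin k) : Finset V := {w ∈ W j.succ | G.Adj v w ↔ H.Adj 0 j.succ}
    by_cases hgood : ∃ v ∈ W 0, ∀ j, β * s ≤ #(N v j)
    · obtain ⟨v, hv, hN⟩ := hgood
      obtain ⟨φ, hφ, hadj⟩ | ⟨i, j, hij, A, hA, B, hB, hAs, hBs, hAB⟩ :=
        ih (H.comap Fin.succ) (N v) (by positivity) hN
      · refine .inl ⟨Fin.cons v φ, Fin.cases hv fun i ↦ (mem_filter.1 (hφ i)).1, ?_⟩
        exact adj_iff_adj_fin_cons G H (fun j ↦ (mem_filter.1 (hφ j)).2) hadj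
      · have hle : β ^ (k + 1) / ((k + 1 : ℕ) + 1) * s ≤ β ^ k / (k + 1) * (β * s) := calc
          _ ≤ β ^ (k + 1) / (k + 1) * s := by gcongr; simp
          _ = β ^ k / (k + 1) * (β * s) := by ring
        exact .inr ⟨i.succ, j.succ, Fin.succ_injective k |>.ne hij, A,
          hA.trans (filter_subset _ _), B, hB.trans (filter_subset _ _), hle.trans hAs,
          hle.trans hBs, hAB⟩
    · push Not at hgood
      have hW0 : (W 0).Nonempty := by
        rw [← card_pos]
        exact_mod_cast hs.trans_le (hW 0)
      obtain ⟨j, A, hA, hcard, hAB⟩ := exists_sparseTo_of_forall_exists_le hW0 fun v hv ↦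
        let ⟨j, hj⟩ := hgood v hv
        ⟨j, hj.le.trans (mul_le_mul_of_nonneg_left (hW j.succ) hβ.le)⟩
      have hcard' : (#(W 0) : ℝ) ≤ k * #A := by exact_mod_cast Fintype.card_fin k ▸ hcard
      have hcoef : β ^ (k + 1) / ((k + 1 : ℕ) + 1) * s ≤ s / (k + 1) := calc
        _ ≤ 1 / ((k : ℝ) + 1) * s := by
          gcongr
          · exact pow_le_one₀ hβ.le hβ1
          · simp
        _ = s / (k + 1) := by ring
      refine .inr ⟨0, j.succ, (Fin.succ_ne_zero j).symm, A, hA, W j.succ, subset_rfl,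
        hcoef.trans ?_, hcoef.trans ((div_le_self hs.le (by simp)).trans (hW _)), hAB⟩
      rw [div_le_iff₀ (by positivity)]
      nlinarith [hW 0]

end GreedyEmbedding

section OrderedPair

theorem exists_consecutive_subsets {α : Type*} [LinearOrder α] (S : Finset α) {k m : ℕ}
    (h : k * m ≤ #S) :
    ∃ W : Fin k → Finset α, (∀ i, W i ⊆ S) ∧ (∀ i, #(W i) = m) ∧
      ∀ i j, i < j → ∀ x ∈ W i, ∀ y ∈ W j, x < y := by
  let f := S.orderEmbOfCardLe h
  refine ⟨fun i ↦ univ.image fun r : Fin m ↦ f (finProdFinEquiv (i, r)), fun i ↦ ?_, fun i ↦ ?_,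
    fun i j hij ↦ ?_⟩
  · simpa [image_subset_iff] using fun r ↦ S.orderEmbOfCardLe_mem h _
  · rw [card_image_of_injective, card_univ, Fintype.card_fin]
    exact f.injective.comp (finProdFinEquiv.injective.comp (Prod.mk_right_injective i))
  · simp only [mem_image, mem_univ, true_and, forall_exists_index, forall_apply_eq_imp_iff]
    intro r r'
    rw [f.lt_iff_lt, Fin.lt_def, finProdFinEquiv_apply_val, finProdFinEquiv_apply_val]
    calc r + m * i < m * (i + 1) := by rw [mul_add_one]; lia
      _ ≤ m * j := Nat.mul_le_mul_left m hij
      _ ≤ r' + m * j := Nat.le_add_left _ _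

/-- The proportion of the vertices that can be guaranteed for both sides of a `β`-sparse pair in an
ordered graph without induced ordered copies of a graph on `k` vertices. The factor
`1 / (2 * (k + 1))` is the loss from cutting into intervals, each embedded vertex costs a factor
`β`, and `1 / (k + 1)` comes from the pigeonhole principle when the embedding gets stuck. -/
noncomputable def sparsePairRatio (k : ℕ) (β : ℝ) : ℝ :=
  β ^ k / (k + 1) / (2 * (k + 1))

theorem sparsePairRatio_pos (k : ℕ) {β : ℝ} (hβ : 0 < β) : 0 < sparsePairRatio k β := by
  unfold sparsePairRatio
  positivity

theorem sparsePairRatio_le_inv (k : ℕ) {β : ℝ} (hβ : 0 ≤ β) (hβ1 : β ≤ 1) :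
    sparsePairRatio k β ≤ (k + 1 : ℝ)⁻¹ := calc
  sparsePairRatio k β ≤ 1 / 1 / (1 * (k + 1)) := by
    unfold sparsePairRatio
    gcongr
    · exact pow_le_one₀ hβ hβ1
    · simp
    · simp
  _ = (k + 1 : ℝ)⁻¹ := by simp

theorem sparsePairRatio_le_one (k : ℕ) {β : ℝ} (hβ : 0 ≤ β) (hβ1 : β ≤ 1) :
    sparsePairRatio k β ≤ 1 :=
  (sparsePairRatio_le_inv k hβ hβ1).trans (inv_le_one_of_one_le₀ (by simp))

theorem lt_of_one_le_sparsePairRatio_mul {k n : ℕ} {β : ℝ} (hβ : 0 ≤ β) (hβ1 : β ≤ 1)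
    (hn : 1 ≤ sparsePairRatio k β * n) : k < n := by
  have : (1 : ℝ) ≤ (k + 1 : ℝ)⁻¹ * n :=
    hn.trans (by gcongr; exact sparsePairRatio_le_inv k hβ hβ1)
  rw [le_inv_mul_iff₀ (by positivity), mul_one] at this
  exact_mod_cast this

variable {V : Type*} [LinearOrder V] {G : SimpleGraph V} [DecidableRel G.Adj] {k : ℕ}
  {H : SimpleGraph (Fin k)} {β : ℝ} {S : Finset V}

theorem exists_disjoint_sparseTo (hG : ¬ ∃ φ : H ↪g G, StrictMono φ) (hβ : 0 < β) (hβ1 : β ≤ 1)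
    (hS : k < #S) :
    ∃ A ⊆ S, ∃ B ⊆ S, Disjoint A B ∧
      sparsePairRatio k β * #S ≤ #A ∧ sparsePairRatio k β * #S ≤ #B ∧
        (SparseTo G β A B ∨ SparseTo Gᶜ β A B) := by
  set m := #S / (k + 1)
  have hm0 : 0 < m := Nat.div_pos hS k.succ_pos
  have hmS : (#S : ℝ) ≤ 2 * (k + 1) * m := by
    have h1 : #S < (k + 1) * (m + 1) := Nat.lt_mul_div_succ _ k.succ_pos
    have h2 : (k + 1) * (m + 1) ≤ 2 * (k + 1) * m := by nlinarith
    exact_mod_cast (h1.trans_le h2).le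
  obtain ⟨W, hWS, hWm, hWlt⟩ := exists_consecutive_subsets S (k := k) (m := m) <|
    (Nat.mul_le_mul_right m k.le_succ).trans (Nat.mul_div_le _ _)
  have hdisj : ∀ i j, i ≠ j → Disjoint (W i) (W j) := by
    intro i j hij
    rw [disjoint_left]
    intro x hi hj
    rcases hij.lt_or_gt with h | h
    · exact (hWlt i j h x hi x hj).false
    · exact (hWlt j i h x hj x hi).false
  rcases exists_transversal_or_exists_sparseTo G H W hβ hβ1 (s := m) (by exact_mod_cast hm0)
    (fun i ↦ by rw [hWm]) with ⟨φ, hφ, hadj⟩ | ⟨i, j, hij, A, hA, B, hB, hAm, hBm, hAB⟩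
  · have hmono : StrictMono φ := fun i j hij ↦ hWlt i j hij _ (hφ i) _ (hφ j)
    exact absurd ⟨⟨⟨φ, hmono.injective⟩, (hadj _ _).symm⟩, hmono⟩ hG
  · have hle : sparsePairRatio k β * #S ≤ β ^ k / (k + 1) * m := by
      rw [sparsePairRatio, div_mul_eq_mul_div, div_le_iff₀ (by positivity), mul_assoc]
      gcongr
      linarith
    exact ⟨A, hA.trans (hWS i), B, hB.trans (hWS j),
      disjoint_of_subset_left hA (disjoint_of_subset_right hB (hdisj i j hij)),
      hle.trans hAm, hle.trans hBm, hAB⟩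

end OrderedPair

section DensityIncrement

variable {V : Type*} {G : SimpleGraph V} [DecidableRel G.Adj] {t i : ℕ} {β δ : ℝ}
  {A B S U : Finset V}

variable (G t i U) in
/-- `U` is a set reached after `i` rounds of doubling the size and decreasing the density by the
factor `3 / 4`, starting from an arbitrary set of `t` vertices. Prescribing the size exactly
guarantees that the two sets joined in a round are equally large. -/
def IsDyadicSparse : Prop :=
  #U = 2 ^ i * t ∧ (#(G.interedges U U) : ℝ) ≤ (3 / 4) ^ i * #U ^ 2

theorem isDyadicSparse_zero (hU : #U = t) : IsDyadicSparse G t 0 U := by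
  refine ⟨by simpa using hU, ?_⟩
  rw [pow_zero, one_mul, sq]
  exact_mod_cast G.card_interedges_le_mul U U

theorem card_interedges_union_self_le [DecidableEq V] (A B : Finset V) :
    #(G.interedges (A ∪ B) (A ∪ B)) ≤
      #(G.interedges A A) + #(G.interedges B B) + 2 * #(G.interedges A B) := by
  have hsub : G.interedges (A ∪ B) (A ∪ B) ⊆
      (G.interedges A A ∪ G.interedges B B) ∪ (G.interedges A B ∪ G.interedges B A) := by
    intro p
    simp only [mem_union, SimpleGraph.mem_interedges_iff]
    tauto
  have hcomm : #(G.interedges B A) = #(G.interedges A B) := card_interedges_comm G B A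
  have := card_le_card hsub
  have := card_union_le (G.interedges A A ∪ G.interedges B B)
    (G.interedges A B ∪ G.interedges B A)
  have := card_union_le (G.interedges A A) (G.interedges B B)
  have := card_union_le (G.interedges A B) (G.interedges B A)
  lia

theorem IsDyadicSparse.union [DecidableEq V] (hA : IsDyadicSparse G t i A)
    (hB : IsDyadicSparse G t i B) (hdisj : Disjoint A B) (hAB : SparseTo G β A B)
    (hβ : 2 * β ≤ (3 / 4) ^ i) :
    IsDyadicSparse G t (i + 1) (A ∪ B) := by
  have hcard : #B = #A := hB.1.trans hA.1.symm
  have hunion : #(A ∪ B) = 2 * #A := by rw [card_union_of_disjoint hdisj, hcard, two_mul]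
  refine ⟨by rw [hunion, hA.1]; ring, ?_⟩
  have hcross : (2 * #(G.interedges A B) : ℝ) ≤ (3 / 4) ^ i * #A ^ 2 := calc
    (2 * #(G.interedges A B) : ℝ) ≤ 2 * (#A * (β * #B)) := by gcongr; exact hAB.card_interedges_le
    _ = 2 * β * #A ^ 2 := by rw [hcard]; ring
    _ ≤ (3 / 4) ^ i * #A ^ 2 := by gcongr
  have hBB := hB.2
  rw [hcard] at hBB
  calc (#(G.interedges (A ∪ B) (A ∪ B)) : ℝ)
      ≤ #(G.interedges A A) + #(G.interedges B B) + 2 * #(G.interedges A B) := by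
        exact_mod_cast card_interedges_union_self_le A B
    _ ≤ 3 * ((3 / 4) ^ i * #A ^ 2) := by linarith [hA.2]
    _ = (3 / 4) ^ (i + 1) * #(A ∪ B) ^ 2 := by rw [hunion]; push_cast; ring

theorem exists_isDyadicSparse_succ_of_sparseTo (hAS : A ⊆ S) (hBS : B ⊆ S) (hdisj : Disjoint A B)
    (hA : δ * #S ≤ #A) (hB : δ * #S ≤ #B) (hAB : SparseTo G β A B) (hβ : 0 < β)
    (hβi : 4 * β ≤ (3 / 4) ^ i) (ht : 0 < t)
    (h : ∀ T ⊆ S, δ / 2 * #S ≤ #T → ∃ U ⊆ T, IsDyadicSparse G t i U) :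
    ∃ U ⊆ S, IsDyadicSparse G t (i + 1) U := by
  classical
  obtain ⟨A', hA'A, hA'⟩ := h A hAS (by
    have : (0 : ℝ) ≤ #A := by positivity
    linarith)
  have hA'ne : A'.Nonempty := by
    rw [← card_pos, hA'.1]
    positivity
  obtain ⟨B₀, hB₀B, hB₀, hsparse⟩ := (hAB.mono_left hA'A).exists_subset_swap hβ hA'ne
  obtain ⟨B', hB'B₀, hB'⟩ := h B₀ (hB₀B.trans hBS) (by
    have : (#B : ℝ) ≤ 2 * #B₀ := by exact_mod_cast hB₀
    linarith)
  have hdisj' : Disjoint B' A' :=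
    (disjoint_of_subset_left hA'A (disjoint_of_subset_right (hB'B₀.trans hB₀B) hdisj)).symm
  exact ⟨B' ∪ A', union_subset (hB'B₀.trans (hB₀B.trans hBS)) (hA'A.trans hAS),
    hB'.union hA' hdisj' (hsparse.mono_left hB'B₀) (by linarith)⟩

end DensityIncrement

section Rodl

variable {V : Type*} [LinearOrder V] {G : SimpleGraph V} [DecidableRel G.Adj] {k t : ℕ}
  {H : SimpleGraph (Fin k)} {S : Finset V} {β ε : ℝ}

theorem exists_isDyadicSparse_or_compl_succ {i j : ℕ} (hG : ¬ ∃ φ : H ↪g G, StrictMono φ)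
    (hβ : 0 < β) (hβi : 4 * β ≤ (3 / 4) ^ i) (hβj : 4 * β ≤ (3 / 4) ^ j) (ht : 0 < t)
    (hS : k < #S)
    (hi : ∀ T ⊆ S, sparsePairRatio k β / 2 * #S ≤ #T →
      ∃ U ⊆ T, IsDyadicSparse G t i U ∨ IsDyadicSparse Gᶜ t (j + 1) U)
    (hj : ∀ T ⊆ S, sparsePairRatio k β / 2 * #S ≤ #T →
      ∃ U ⊆ T, IsDyadicSparse G t (i + 1) U ∨ IsDyadicSparse Gᶜ t j U) :
    ∃ U ⊆ S, IsDyadicSparse G t (i + 1) U ∨ IsDyadicSparse Gᶜ t (j + 1) U := by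
  by_contra! hcon
  have hβ1 : β ≤ 1 := by linarith [hβi.trans (pow_le_one₀ (by norm_num) (by norm_num))]
  obtain ⟨A, hA, B, hB, hdisj, hAS, hBS, hAB | hAB⟩ := exists_disjoint_sparseTo hG hβ hβ1 hS
  · obtain ⟨U, hUS, hU⟩ :=
      exists_isDyadicSparse_succ_of_sparseTo hA hB hdisj hAS hBS hAB hβ hβi ht fun T hTS hT ↦
        let ⟨U, hUT, hU⟩ := hi T hTS hT
        ⟨U, hUT, hU.resolve_right (hcon U (hUT.trans hTS)).2⟩
    exact (hcon U hUS).1 hU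
  · obtain ⟨U, hUS, hU⟩ :=
      exists_isDyadicSparse_succ_of_sparseTo hA hB hdisj hAS hBS hAB hβ hβj ht fun T hTS hT ↦
        let ⟨U, hUT, hU⟩ := hj T hTS hT
        ⟨U, hUT, hU.resolve_left (hcon U (hUT.trans hTS)).1⟩
    exact (hcon U hUS).2 hU

theorem exists_subset_card_eq_of_le_pow_mul {α : Type*} {S : Finset α} {r : ℝ} {n : ℕ}
    (hr : 0 ≤ r) (hr1 : r ≤ 1) (hS : t ≤ r ^ n * #S) : ∃ U ⊆ S, #U = t := by
  have : (t : ℝ) ≤ #S :=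
    hS.trans (mul_le_of_le_one_left (by positivity) (pow_le_one₀ hr hr1))
  exact exists_subset_card_eq (mod_cast this)

theorem exists_isDyadicSparse_or_compl (hG : ¬ ∃ φ : H ↪g G, StrictMono φ) (hβ : 0 < β)
    (ht : 0 < t) (i j : ℕ) (hβi : 4 * β ≤ (3 / 4) ^ i) (hβj : 4 * β ≤ (3 / 4) ^ j)
    (hS : t ≤ (sparsePairRatio k β / 2) ^ (i + j) * #S) :
    ∃ U ⊆ S, IsDyadicSparse G t i U ∨ IsDyadicSparse Gᶜ t j U := by
  have hβ1 : β ≤ 1 := by linarith [hβi.trans (pow_le_one₀ (by norm_num) (by norm_num))]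
  set r := sparsePairRatio k β / 2
  have hratio := sparsePairRatio_pos k hβ
  have hr : 0 < r := half_pos hratio
  have hr_le : r ≤ sparsePairRatio k β := half_le_self hratio.le
  have hr1 : r ≤ 1 := hr_le.trans (sparsePairRatio_le_one k hβ.le hβ1)
  have hlarge (n : ℕ) (T : Finset V) (hT : t ≤ r ^ (n + 1) * #T) : k < #T := by
    refine lt_of_one_le_sparsePairRatio_mul hβ.le hβ1 ?_
    calc (1 : ℝ) ≤ r ^ (n + 1) * #T := le_trans (mod_cast ht) hT
      _ ≤ sparsePairRatio k β * #T := by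
        gcongr
        exact (pow_le_of_le_one hr.le hr1 n.succ_ne_zero).trans hr_le
  have hshrink (n : ℕ) (T T' : Finset V) (hT : t ≤ r ^ (n + 1) * #T) (hT' : r * #T ≤ #T') :
      t ≤ r ^ n * #T' := calc
    (t : ℝ) ≤ r ^ n * (r * #T) := hT.trans_eq (by ring)
    _ ≤ r ^ n * #T' := by gcongr
  have hpow {n : ℕ} (hn : 4 * β ≤ (3 / 4) ^ (n + 1)) : 4 * β ≤ (3 / 4) ^ n :=
    hn.trans (pow_le_pow_of_le_one (by norm_num) (by norm_num) n.le_succ)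
  induction i generalizing j S with
  | zero =>
    obtain ⟨U, hUS, hU⟩ := exists_subset_card_eq_of_le_pow_mul hr.le hr1 hS
    exact ⟨U, hUS, .inl (isDyadicSparse_zero hU)⟩
  | succ i ihi =>
    induction j generalizing S with
    | zero =>
      obtain ⟨U, hUS, hU⟩ := exists_subset_card_eq_of_le_pow_mul hr.le hr1 hS
      exact ⟨U, hUS, .inr (isDyadicSparse_zero hU)⟩
    | succ j ihj =>
      refine exists_isDyadicSparse_or_compl_succ hG hβ (hpow hβi) (hpow hβj) ht (hlarge _ S hS)
        (fun T _ hT ↦ ihi (j + 1) (hpow hβi) hβj (hshrink _ S T ?_ hT))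
        fun T _ hT ↦ ihj (hpow hβj) (hshrink (i + 1 + j) S T hS hT)
      convert hS using 3
      lia

theorem edgeCountIn_le_or_le_of_card_interedges_le (hε : 0 ≤ ε) {U : Finset V}
    (h : (#(G.interedges U U) : ℝ) ≤ ε / 2 * #U ^ 2 ∨
      (#(Gᶜ.interedges U U) : ℝ) ≤ ε / 2 * #U ^ 2) :
    (edgeCountIn G U : ℝ) ≤ ε * (#U).choose 2 ∨
      (1 - ε) * (#U).choose 2 ≤ (edgeCountIn G U : ℝ) := by
  refine h.imp (edgeCountIn_le_mul_choose_two hε) fun hc ↦ ?_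
  have hadd : (edgeCountIn G U + edgeCountIn Gᶜ U : ℝ) = (#U).choose 2 := by
    exact_mod_cast edgeCountIn_add_edgeCountIn_compl G U
  linarith [edgeCountIn_le_mul_choose_two hε hc]

theorem exists_subset_card_interedges_le_or_compl (k : ℕ) {η : ℝ} (hη : 0 < η) :
    ∃ c : ℝ, 0 < c ∧ ∀ {V : Type*} [LinearOrder V] (H : SimpleGraph (Fin k)) (G : SimpleGraph V)
      [DecidableRel G.Adj], (¬ ∃ φ : H ↪g G, StrictMono φ) → ∀ (S : Finset V),
        1 ≤ c * #S → ∃ U ⊆ S, c / 2 * #S ≤ #U ∧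
          ((#(G.interedges U U) : ℝ) ≤ η * #U ^ 2 ∨ (#(Gᶜ.interedges U U) : ℝ) ≤ η * #U ^ 2) := by
  obtain ⟨i, hi⟩ := exists_pow_lt_of_lt_one hη (by norm_num : (3 / 4 : ℝ) < 1)
  set β : ℝ := (3 / 4) ^ i / 4 with hβ
  have hδ : 0 < sparsePairRatio k β := sparsePairRatio_pos k (by positivity)
  refine ⟨(sparsePairRatio k β / 2) ^ (i + i), by positivity, fun H G _ hG S hS ↦ ?_⟩
  obtain ⟨U, hUS, hU⟩ := exists_isDyadicSparse_or_compl hG (by positivity)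
    (Nat.floor_pos.2 hS) i i (by linarith) (by linarith) (Nat.floor_le (by positivity))
  have hcard := hU.elim And.left And.left
  have hfloor : ⌊(sparsePairRatio k β / 2) ^ (i + i) * (#S : ℝ)⌋₊ ≤ #U := by
    rw [hcard]
    exact Nat.le_mul_of_pos_left _ (by positivity)
  refine ⟨U, hUS, ?_, hU.imp (fun h ↦ h.2.trans ?_) fun h ↦ h.2.trans ?_⟩
  · rw [div_mul_eq_mul_div]
    exact (Nat.div_two_lt_floor hS).le.trans (mod_cast hfloor)
  all_goals gcongr

end Rodl

theorem ordered_induced_Rodl_general (k : ℕ) {ε : ℝ} (hε : 0 < ε) :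
    ∃ c₀ : ℝ, 0 < c₀ ∧
      ∀ {V : Type*} [LinearOrder V] (H : SimpleGraph (Fin k)) (G : SimpleGraph V),
        (¬ ∃ φ : H ↪g G, StrictMono φ) →
        ∀ S : Finset V, ∃ U ⊆ S, c₀ * #S ≤ #U ∧
          ((edgeCountIn G U : ℝ) ≤ ε * (#U).choose 2 ∨
            (1 - ε) * (#U).choose 2 ≤ (edgeCountIn G U : ℝ)) := by
  classical
  obtain ⟨c, hc, h⟩ := exists_subset_card_interedges_le_or_compl k (half_pos hε)
  refine ⟨c / 2, half_pos hc, fun H G hG S ↦ ?_⟩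
  rcases le_or_gt 1 (c * #S) with hS | hS
  · obtain ⟨U, hUS, hU, hsparse⟩ := h H G hG S hS
    exact ⟨U, hUS, hU, edgeCountIn_le_or_le_of_card_interedges_le hε.le hsparse⟩
  · obtain ⟨U, hUS, hU⟩ : ∃ U ⊆ S, #U = min 1 #S := exists_subset_card_eq (min_le_right _ _)
    refine ⟨U, hUS, ?_, .inl ?_⟩
    · rcases S.eq_empty_or_nonempty with rfl | hne
      · simp
      · have : #U = 1 := hU.trans (min_eq_left hne.card_pos)
        rw [this, Nat.cast_one]
        linarith
    · rw [edgeCountIn_eq_zero_of_card_le_one (hU.trans_le (min_le_left _ _)), Nat.cast_zero]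
      positivity

end

/-- For every ordered graph `H` and every `ε > 0` there is `c₀ > 0` such that every
ordered graph `G` on `n` vertices with no induced ordered copy of `H` has a subset `U` of
at least `c₀·n` vertices inducing at most `ε·C(|U|,2)` or at least `(1−ε)·C(|U|,2)` edges. -/
theorem ordered_induced_Rodl (k : ℕ) (H : SimpleGraph (Fin k)) (ε : ℝ) (hε : 0 < ε) :
    ∃ c₀ : ℝ, 0 < c₀ ∧
      ∀ (n : ℕ) (G : SimpleGraph (Fin n)),
        ¬ ContainsOrdered H G →
        ∃ U : Finset (Fin n), c₀ * n ≤ (U.card : ℝ) ∧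
          ((edgeCountIn G U : ℝ) ≤ ε * (U.card.choose 2 : ℝ) ∨
            (1 - ε) * (U.card.choose 2 : ℝ) ≤ (edgeCountIn G U : ℝ)) := by
  obtain ⟨c₀, hc₀, h⟩ := ordered_induced_Rodl_general k hε
  refine ⟨c₀, hc₀, fun n G hG ↦ ?_⟩
  obtain ⟨U, -, hU⟩ := h H G
    (fun ⟨φ, hφ⟩ ↦ hG ⟨φ, hφ, fun _ _ ↦ φ.map_adj_iff.symm⟩) Finset.univ
  exact ⟨U, by simpa using hU⟩
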